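/- For every b = (b₁,…,b₆) ∈ ℂ⁶ such that the 7×7 matrix X(b) has 7 pairwise distinct eigenvalues (i.e., X(b) is regular semisimple in so₇(ℂ)), there exists a ∈ ℂ such that, setting Y = (I₇ + aE)·X(b)·(I₇ − aE), the 2×2 submatrix of p(Y)² with rows {1,2} and columns {6,7} has determinant 0; equivalently, the matrix p(Y)² has rank at most 1. (This verifies, for the order-2 stable grading of so₇, that any stable vector can be conjugated by an element exp(a·E) of exp(𝔤(m)) so that its degree-one component lies in the smaller nilpotent orbit O_P, as predicted by Conjecture 7.1.) -/

import Mathlib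

open Matrix

/-- The `7 × 7` matrix `X(b)` representing (after partial normalization) an
element of the degree-one piece of the order-2 stable grading on `so₇(ℂ)`. -/
noncomputable def X7 (b1 b2 b3 b4 b5 b6 : ℂ) : Matrix (Fin 7) (Fin 7) ℂ :=
  !![0, 0, 1, 0, 0, 0, 0;
     0, 0, 0, 0, 1, 0, 0;
     -b6, -b5, 0, 0, 0, -1, 0;
     -2 * b4, -2 * b3, 0, 0, 0, 0, 0;
     -b2, -b1, 0, 0, 0, 0, -1;
     0, 0, b1, b3, b5, 0, 0;
     0, 0, b2, b4, b6, 0, 0]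

/-- The matrix `E ∈ M₇(ℂ)` whose only nonzero entries are `E₁₆ = 1` and
`E₂₇ = −1` (1-based indexing), so that `E² = 0`. -/
noncomputable def E7 : Matrix (Fin 7) (Fin 7) ℂ :=
  !![0, 0, 0, 0, 0, 1, 0;
     0, 0, 0, 0, 0, 0, -1;
     0, 0, 0, 0, 0, 0, 0;
     0, 0, 0, 0, 0, 0, 0;
     0, 0, 0, 0, 0, 0, 0;
     0, 0, 0, 0, 0, 0, 0;
     0, 0, 0, 0, 0, 0, 0]

/-- For `Y ∈ M₇(ℂ)`, `pr Y` keeps the entries `Y i j` with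
(`i ∈ {1,2}` and `j ∈ {3,4,5}`) or (`i ∈ {3,4,5}` and `j ∈ {6,7}`)
(1-based indexing; 0-based: `i ∈ {0,1}, j ∈ {2,3,4}` or `i ∈ {2,3,4}, j ∈ {5,6}`)
and sets all other entries to `0`. -/
noncomputable def pr (Y : Matrix (Fin 7) (Fin 7) ℂ) : Matrix (Fin 7) (Fin 7) ℂ :=
  Matrix.of fun i j =>
    if ((i = 0 ∨ i = 1) ∧ (j = 2 ∨ j = 3 ∨ j = 4)) ∨
       ((i = 2 ∨ i = 3 ∨ i = 4) ∧ (j = 5 ∨ j = 6)) then Y i j else 0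

/-
`X(b)` exchanges `⟨e₃, e₄, e₅⟩` with `⟨e₁, e₂, e₆, e₇⟩`, so its characteristic polynomial is
`t χ(t²)`, where `χ` is the characteristic polynomial of the `3 × 3` block of `X(b)²`; hence `χ`
is squarefree when the eigenvalues of `X(b)` are distinct. On the other side, `p(Y)²` lives in a
`2 × 2` corner, whose determinant is a polynomial in `a` of degree at most `4` with constant term
`1`. If it had no root it would be constant, and the vanishing of its four other coefficients forces
`b₆ = b₁` and, with `b₁ = 3s`, either `χ = T² (T + 12s)` or `χ = (T + 4s)³`.
-/

open Polynomial

section Charpoly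

variable {R m n : Type*} [CommRing R] [Fintype m] [Fintype n] [DecidableEq m] [DecidableEq n]

lemma expand_charpoly (p : ℕ) (M : Matrix n n R) :
    expand R p M.charpoly = (scalar n (X ^ p : R[X]) - M.map C).det := by
  rw [charpoly, AlgHom.map_det]
  congr 1
  ext i j
  obtain rfl | hij := eq_or_ne i j <;> simp [*]

lemma X_pow_mul_charpoly_fromBlocks_zero_zero (U : Matrix m n R) (V : Matrix n m R) :
    X ^ Fintype.card n * (fromBlocks 0 U V 0).charpoly =
      X ^ Fintype.card m * expand R 2 (V * U).charpoly := by
  have h : (fromBlocks 0 U V 0).charmatrix * fromBlocks 1 (U.map C) 0 (scalar n X) =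
      fromBlocks (scalar m X) 0 (-V.map C) (scalar n (X ^ 2) - (V * U).map C) := by
    rw [charmatrix_fromBlocks, fromBlocks_multiply]
    congr 1
    · simp [charmatrix]
    · ext i j
      simp [charmatrix, mul_comm X]
    · simp
    · simp [charmatrix, pow_two, sub_eq_neg_add]
  rw [expand_charpoly]
  simpa [charpoly, mul_comm] using congr_arg det h

end Charpoly

section Rank

variable {K k l m n : Type*} [Field K]

lemma rank_lt_card_of_det_eq_zero [Fintype n] [DecidableEq n] {A : Matrix n n K}
    (h : A.det = 0) : A.rank < Fintype.card n := by
  refine A.rank_le_card_width.lt_of_ne fun hr => ?_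
  have hli : LinearIndependent K A.row :=
    linearIndependent_iff_card_eq_finrank_span.2 (hr.symm.trans A.rank_eq_finrank_span_row)
  exact (isUnit_iff_isUnit_det A).1 (linearIndependent_rows_iff_isUnit.1 hli) |>.ne_zero h

lemma rank_le_rank_submatrix_id_left [Finite m] [Fintype n] [Fintype l] (A : Matrix m n K)
    (c : l → n) (hc : ∀ j ∉ Set.range c, A.col j = 0) : A.rank ≤ (A.submatrix id c).rank := by
  rw [rank_eq_finrank_span_cols, rank_eq_finrank_span_cols]
  refine Submodule.finrank_mono (Submodule.span_le.2 ?_)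
  rintro _ ⟨j, rfl⟩
  by_cases hj : j ∈ Set.range c
  · obtain ⟨i, rfl⟩ := hj
    exact Submodule.subset_span ⟨i, rfl⟩
  · simp [hc j hj]

lemma rank_le_rank_submatrix [Finite k] [Fintype l] [Finite m] [Fintype n] (A : Matrix m n K)
    (r : k → m) (c : l → n) (hr : ∀ i ∉ Set.range r, A.row i = 0)
    (hc : ∀ j ∉ Set.range c, A.col j = 0) : A.rank ≤ (A.submatrix r c).rank := by
  cases nonempty_fintype k
  cases nonempty_fintype m
  calc A.rank ≤ (A.submatrix id c).rank := rank_le_rank_submatrix_id_left A c hc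
    _ = (A.submatrix id c)ᵀ.rank := (rank_transpose _).symm
    _ ≤ ((A.submatrix id c)ᵀ.submatrix id r).rank :=
      rank_le_rank_submatrix_id_left _ r fun i hi => funext fun j => congr_fun (hr i hi) (c j)
    _ = (A.submatrix r c).rank := rank_transpose (A.submatrix r c)

end Rank

lemma squarefree_of_squarefree_expand {R : Type*} [CommRing R] [IsDomain R] {p : ℕ} (hp : 0 < p)
    {f : R[X]} (h : Squarefree (expand R p f)) : Squarefree f := by
  have := isLocalHom_expand R hp
  intro d hd
  have hdvd : expand R p d * expand R p d ∣ expand R p f := by simpa using map_dvd (expand R p) hd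
  exact isUnit_of_map_unit (expand R p) d (h _ hdvd)

lemma exists_sum_mul_pow_eq_zero {K : Type*} [Field K] [IsAlgClosed K] {n : ℕ} (c : Fin n → K)
    {k : Fin n} (hk : (k : ℕ) ≠ 0) (hc : c k ≠ 0) : ∃ a, ∑ i, c i * a ^ (i : ℕ) = 0 := by
  classical
  have hcoeff : (ofFn n c).coeff k ≠ 0 := by simpa using hc
  have hdeg : (ofFn n c).degree ≠ 0 := fun h => hcoeff (coeff_eq_zero_of_degree_lt (by
    rw [h]; exact_mod_cast Nat.pos_of_ne_zero hk))
  obtain ⟨a, ha⟩ := IsAlgClosed.exists_root _ hdeg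
  exact ⟨a, by simpa [ofFn_eq_sum_monomial, eval_finsetSum, IsRoot] using ha⟩

lemma eq_zero_or_eq_neg_four_mul_pow {R : Type*} [CommRing R] [IsDomain R] [NeZero (2 : R)]
    {s u v : R} (h₁ : v ^ 2 = (9 * s ^ 2 + 2 * u) * u ^ 2)
    (h₂ : 2 * s * v = u ^ 2 + 6 * s ^ 2 * u) :
    (u = 0 ∧ v = 0) ∨ (u = -4 * s ^ 2 ∧ v = -4 * s ^ 3) := by
  have hu : u ^ 3 * (u + 4 * s ^ 2) = 0 := by
    linear_combination 4 * s ^ 2 * h₁ - (2 * s * v + u ^ 2 + 6 * s ^ 2 * u) * h₂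
  by_cases hu₀ : u = 0
  · exact .inl ⟨hu₀, by simpa [hu₀] using h₁⟩
  have hu : u = -4 * s ^ 2 := by
    linear_combination (mul_eq_zero_iff_left (pow_ne_zero 3 hu₀)).1 hu
  have hs : s ≠ 0 := by rintro rfl; simp [hu] at hu₀
  refine .inr ⟨hu, mul_left_cancel₀ (mul_ne_zero two_ne_zero hs) ?_⟩
  rw [h₂, hu]
  ring

section CharpolyX7

variable (b1 b2 b3 b4 b5 b6 : ℂ)

/-- The block of `X(b)²` acting on `⟨e₃, e₄, e₅⟩` (1-based). -/
noncomputable def X7SqMiddle : Matrix (Fin 3) (Fin 3) ℂ :=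
  !![-(b1 + b6), -b3, -2 * b5;
     -2 * b4, 0, -2 * b3;
     -2 * b2, -b4, -(b1 + b6)]

lemma charpoly_X7 : (X7 b1 b2 b3 b4 b5 b6).charpoly =
    X * expand ℂ 2 (X7SqMiddle b1 b2 b3 b4 b5 b6).charpoly := by
  let e : Fin 4 ⊕ Fin 3 ≃ Fin 7 :=
    .ofBijective (Sum.elim ![0, 1, 5, 6] ![2, 3, 4]) (by decide)
  let U : Matrix (Fin 4) (Fin 3) ℂ := !![1, 0, 0; 0, 0, 1; b1, b3, b5; b2, b4, b6]
  let V : Matrix (Fin 3) (Fin 4) ℂ :=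
    !![-b6, -b5, -1, 0; -2 * b4, -2 * b3, 0, 0; -b2, -b1, 0, -1]
  have hblocks : reindex e.symm e.symm (X7 b1 b2 b3 b4 b5 b6) = fromBlocks 0 U V 0 := by
    ext (i | i) (j | j) <;> fin_cases i <;> fin_cases j <;> rfl
  have hVU : V * U = X7SqMiddle b1 b2 b3 b4 b5 b6 := by
    ext i j
    fin_cases i <;> fin_cases j <;> simp [U, V, X7SqMiddle] <;> ring
  rw [← charpoly_reindex e.symm, hblocks, ← hVU]
  refine mul_left_cancel₀ (pow_ne_zero 3 X_ne_zero) ?_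
  simpa [pow_succ, mul_assoc] using X_pow_mul_charpoly_fromBlocks_zero_zero U V

lemma charpoly_X7SqMiddle : (X7SqMiddle b1 b2 b3 b4 b5 b6).charpoly =
    X * (X + C (b1 + b6)) ^ 2 - C (4 * (b3 * b4)) * (X + C (b1 + b6)) - C (4 * (b2 * b5)) * X
      + C (4 * (b2 * b3 ^ 2 + b5 * b4 ^ 2)) := by
  simp [charpoly, det_fin_three, X7SqMiddle, C_ofNat]
  ring

lemma squarefree_charpoly_X7SqMiddle
    (h : (X7 b1 b2 b3 b4 b5 b6).charpoly.roots.Nodup) :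
    Squarefree (X7SqMiddle b1 b2 b3 b4 b5 b6).charpoly := by
  have hsep := (nodup_roots_iff_of_splits (charpoly_monic _).ne_zero (IsAlgClosed.splits _)).1 h
  exact squarefree_of_squarefree_expand two_pos
    (hsep.squarefree.squarefree_of_dvd (Dvd.intro_left X (charpoly_X7 ..).symm))

lemma not_squarefree_charpoly_X7SqMiddle
    (h₁ : b1 ^ 2 + 2 * (b3 * b4) = b2 * b5) (h₂ : b2 * b3 ^ 2 = b5 * b4 ^ 2)
    (h₃ : (b2 * b5) ^ 2 = b1 ^ 2 * (b2 * b5) + 2 * b1 * (b5 * b4 ^ 2) + (b3 * b4) ^ 2) :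
    ¬ Squarefree (X7SqMiddle b1 b2 b3 b4 b5 b1).charpoly := by
  obtain ⟨s, rfl⟩ : ∃ s, b1 = 3 * s := ⟨b1 / 3, by ring⟩
  rw [charpoly_X7SqMiddle, h₂, ← h₁]
  have hv : (b5 * b4 ^ 2) ^ 2 = (9 * s ^ 2 + 2 * (b3 * b4)) * (b3 * b4) ^ 2 := by
    linear_combination -b5 * b4 ^ 2 * h₂ - (b3 * b4) ^ 2 * h₁
  have hsv : 2 * s * (b5 * b4 ^ 2) = (b3 * b4) ^ 2 + 6 * s ^ 2 * (b3 * b4) := by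
    rw [← h₁] at h₃
    linear_combination -h₃ / 3
  intro hsq
  rcases eq_zero_or_eq_neg_four_mul_pow hv hsv with ⟨hu, hv⟩ | ⟨hu, hv⟩ <;> rw [hu, hv] at hsq
  · refine not_isUnit_X (hsq X ⟨X + C (12 * s), ?_⟩)
    simp only [map_add, map_mul, map_pow, map_zero, C_ofNat]
    ring
  · refine not_isUnit_X_add_C (4 * s) (hsq (X + C (4 * s)) ⟨X + C (4 * s), ?_⟩)
    simp only [map_add, map_mul, map_neg, map_pow, C_ofNat]
    ring

end CharpolyX7

section Corner

/-- The block of `p(Y)²` with rows `{1, 2}` and columns `{6, 7}` (1-based), the only one that can be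
nonzero. -/
noncomputable def prSqCorner (Y : Matrix (Fin 7) (Fin 7) ℂ) : Matrix (Fin 2) (Fin 2) ℂ :=
  (pr Y ^ 2).submatrix ![0, 1] ![5, 6]

variable (Y : Matrix (Fin 7) (Fin 7) ℂ)

lemma pr_sq_apply_eq_zero {i j : Fin 7}
    (h : i ∉ Set.range ![(0 : Fin 7), 1] ∨ j ∉ Set.range ![(5 : Fin 7), 6]) :
    (pr Y ^ 2) i j = 0 := by
  rw [pow_two, mul_apply]
  refine Finset.sum_eq_zero fun k _ => ?_
  simp only [range_cons, range_empty, Set.union_empty, Set.singleton_union, Set.mem_insert_iff,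
    Set.mem_singleton_iff] at h
  simp only [pr, of_apply]
  split_ifs <;> first | omega | simp

lemma prSqCorner_eq_mul :
    prSqCorner Y = Y.submatrix ![0, 1] ![2, 3, 4] * Y.submatrix ![2, 3, 4] ![5, 6] := by
  ext i j
  rw [prSqCorner, submatrix_apply, pow_two, mul_apply, mul_apply]
  fin_cases i <;> fin_cases j <;> simp [pr, Fin.sum_univ_succ]

variable {Y} in
lemma rank_pr_sq_le_one (h : (prSqCorner Y).det = 0) : (pr Y ^ 2).rank ≤ 1 := by
  have hle : (pr Y ^ 2).rank ≤ (prSqCorner Y).rank :=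
    rank_le_rank_submatrix _ _ _ (fun _ hi => funext fun _ => pr_sq_apply_eq_zero Y (.inl hi))
      (fun _ hj => funext fun _ => pr_sq_apply_eq_zero Y (.inr hj))
  exact hle.trans (Nat.le_of_lt_succ (rank_lt_card_of_det_eq_zero h))

end Corner

section Conjugate

variable (b1 b2 b3 b4 b5 b6 a : ℂ)

/-- The conjugate of `X(b)` by `exp(aE) = I₇ + aE`. -/
noncomputable def X7Conj : Matrix (Fin 7) (Fin 7) ℂ :=
  (1 + a • E7) * X7 b1 b2 b3 b4 b5 b6 * (1 - a • E7)

lemma X7Conj_submatrix_upper :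
    (X7Conj b1 b2 b3 b4 b5 b6 a).submatrix ![0, 1] ![2, 3, 4] =
      !![1 + a * b1, a * b3, a * b5;
         -a * b2, -a * b4, 1 - a * b6] := by
  ext i j
  fin_cases i <;> fin_cases j <;>
    simp [X7Conj, E7, X7, mul_apply, Fin.sum_univ_succ, one_apply, sub_eq_add_neg]

lemma X7Conj_submatrix_lower :
    (X7Conj b1 b2 b3 b4 b5 b6 a).submatrix ![2, 3, 4] ![5, 6] =
      !![-(1 - a * b6), -a * b5;
         2 * a * b4, -2 * a * b3;
         a * b2, -(1 + a * b1)] := by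
  ext i j
  fin_cases i <;> fin_cases j <;>
    simp [X7Conj, E7, X7, mul_apply, Fin.sum_univ_succ, one_apply] <;> ring

lemma det_prSqCorner_X7Conj :
    (prSqCorner (X7Conj b1 b2 b3 b4 b5 b6 a)).det =
      (1 + (b1 - b6) * a - (b1 * b6 + b2 * b5 + 2 * b3 * b4) * a ^ 2) ^ 2
        + 4 * a ^ 2 * (b5 + (b1 * b5 + b3 ^ 2) * a) * (b2 - (b2 * b6 + b4 ^ 2) * a) := by
  rw [prSqCorner_eq_mul, X7Conj_submatrix_upper, X7Conj_submatrix_lower, det_fin_two]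
  simp
  ring

lemma exists_det_prSqCorner_X7Conj_eq_zero
    (h : Squarefree (X7SqMiddle b1 b2 b3 b4 b5 b6).charpoly) :
    ∃ a : ℂ, (prSqCorner (X7Conj b1 b2 b3 b4 b5 b6 a)).det = 0 := by
  let κ := b1 * b6 + b2 * b5 + 2 * b3 * b4
  let c : Fin 5 → ℂ := ![1, 2 * (b1 - b6), (b1 - b6) ^ 2 - 2 * κ + 4 * (b2 * b5),
    -2 * (b1 - b6) * κ + 4 * b2 * (b1 * b5 + b3 ^ 2) - 4 * b5 * (b2 * b6 + b4 ^ 2),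
    κ ^ 2 - 4 * (b1 * b5 + b3 ^ 2) * (b2 * b6 + b4 ^ 2)]
  have hdet (a : ℂ) : ∑ i, c i * a ^ (i : ℕ) =
      (prSqCorner (X7Conj b1 b2 b3 b4 b5 b6 a)).det := by
    rw [det_prSqCorner_X7Conj]
    simp [c, κ, Fin.sum_univ_succ]
    ring
  simp_rw [← hdet]
  by_contra! hroot
  have hc (k : Fin 5) (hk : (k : ℕ) ≠ 0) : c k = 0 :=
    not_not.1 fun hck => (exists_sum_mul_pow_eq_zero c hk hck).elim hroot
  have hc₁ : 2 * (b1 - b6) = 0 := hc 1 (by decide)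
  have hc₂ : (b1 - b6) ^ 2 - 2 * κ + 4 * (b2 * b5) = 0 := hc 2 (by decide)
  have hc₃ : -2 * (b1 - b6) * κ + 4 * b2 * (b1 * b5 + b3 ^ 2) - 4 * b5 * (b2 * b6 + b4 ^ 2) = 0 :=
    hc 3 (by decide)
  have hc₄ : κ ^ 2 - 4 * (b1 * b5 + b3 ^ 2) * (b2 * b6 + b4 ^ 2) = 0 := hc 4 (by decide)
  obtain rfl : b6 = b1 := by linear_combination -hc₁ / 2
  have h₁ : b6 ^ 2 + 2 * (b3 * b4) = b2 * b5 := by linear_combination -hc₂ / 2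
  have h₂ : b2 * b3 ^ 2 = b5 * b4 ^ 2 := by linear_combination hc₃ / 4
  refine not_squarefree_charpoly_X7SqMiddle b6 b2 b3 b4 b5 h₁ h₂ ?_ h
  linear_combination hc₄ / 4 + b6 * h₂ - (b6 ^ 2 + 3 * b2 * b5 + 2 * b3 * b4) / 4 * h₁

end Conjugate

/-- For every `b ∈ ℂ⁶` such that `X(b)` has 7 pairwise distinct eigenvalues
(i.e. `X(b)` is regular semisimple in `so₇(ℂ)`), there exists `a ∈ ℂ` such
that, setting `Y = (I₇ + aE)·X(b)·(I₇ − aE)`, the `2 × 2` submatrix of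
`p(Y)²` with rows `{1,2}` and columns `{6,7}` (1-based) has determinant `0`;
equivalently, `p(Y)²` has rank at most `1`. -/
theorem stmt13 (b1 b2 b3 b4 b5 b6 : ℂ)
    (hdist : (X7 b1 b2 b3 b4 b5 b6).charpoly.roots.Nodup)
    (hcard : (X7 b1 b2 b3 b4 b5 b6).charpoly.roots.card = 7) :
    ∃ a : ℂ,
      ∀ Y : Matrix (Fin 7) (Fin 7) ℂ,
        Y = (1 + a • E7) * X7 b1 b2 b3 b4 b5 b6 * (1 - a • E7) →
          ((pr Y ^ 2) 0 5 * (pr Y ^ 2) 1 6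
              - (pr Y ^ 2) 0 6 * (pr Y ^ 2) 1 5 = 0) ∧
            (pr Y ^ 2).rank ≤ 1 := by
  obtain ⟨a, ha⟩ := exists_det_prSqCorner_X7Conj_eq_zero b1 b2 b3 b4 b5 b6
    (squarefree_charpoly_X7SqMiddle b1 b2 b3 b4 b5 b6 hdist)
  refine ⟨a, ?_⟩
  rintro Y rfl
  exact ⟨(det_fin_two _).symm.trans ha, rank_pr_sq_le_one ha⟩
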